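/- Let 𝒳, 𝒴, 𝒵, 𝒰 be finite sets, and let P_{XYZ}, Q_{XYZ} be pmfs such that Q_{YZ|X} = Q_{Z|X} Q_{Y|Z} (X → Z → Y Markov under Q) and P_{XZ} = Q_{XZ}. For every channel P_{U|X}, with P_{UXYZ} = P_{U|X} P_{XYZ}, it holds that ∑_u P_U(u) f(P_{X|U}(·|u)) ≤ I_P(Y;U|Z) + D(P_{YZ} ‖ Q_{YZ}). -/

import Mathlib

open scoped BigOperators

noncomputable section

open Classical in
/-- Pushforward of a finitely supported mass function along a map. -/
def pushf {Ω α : Type*} [Fintype Ω] (p : Ω → ℝ) (f : Ω → α) : α → ℝ :=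
  fun a => ∑ ω, if f ω = a then p ω else 0

/-- `p` is a probability mass function. -/
def IsPMF {α : Type*} [Fintype α] (p : α → ℝ) : Prop :=
  (∀ a, 0 ≤ p a) ∧ ∑ a, p a = 1

/-- Kullback–Leibler divergence `D(p‖q)` of mass functions, valued in `EReal`
(equal to `⊤` if `p` is not absolutely continuous w.r.t. `q`). -/
def klDiv {α : Type*} [Fintype α] (p q : α → ℝ) : EReal :=
  if ∀ a, q a = 0 → p a = 0 then ((∑ a, p a * Real.log (p a / q a) : ℝ) : EReal) else ⊤

/-- Shannon entropy. -/
def entropy {α : Type*} [Fintype α] (p : α → ℝ) : ℝ :=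
  -∑ a, p a * Real.log (p a)

/-- Conditional mutual information `I(A;B|C)` under the mass function `p`. -/
def condMI {Ω α β γ : Type*} [Fintype Ω] [Fintype α] [Fintype β] [Fintype γ]
    (p : Ω → ℝ) (A : Ω → α) (B : Ω → β) (C : Ω → γ) : ℝ :=
  entropy (pushf p (fun ω => (A ω, C ω))) + entropy (pushf p (fun ω => (B ω, C ω)))
    - entropy (pushf p (fun ω => (A ω, B ω, C ω))) - entropy (pushf p C)

/-- First marginal of a joint mass function. -/
def margFst {α β : Type*} [Fintype α] [Fintype β] (p : α × β → ℝ) : α → ℝ :=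
  fun a => ∑ b, p (a, b)

/-- Conditional mass function of the second coordinate given the first. -/
def condSnd {α β : Type*} [Fintype α] [Fintype β] (p : α × β → ℝ) : α → β → ℝ :=
  fun a b => p (a, b) / margFst p a

/-- Output distribution of a channel on an input distribution. -/
def outDist {α β : Type*} [Fintype α] [Fintype β] (ch : α → β → ℝ) (pa : α → ℝ) : β → ℝ :=
  fun b => ∑ a, pa a * ch a b

/-- The difference functional
`f(P'_X) = sup_{Q̂_X ≪ Q_X} D(P'_Y‖Q̂_Y) − D(P'_Z‖Q̂_Z)`. -/
def fdiff {X Y Z : Type*} [Fintype X] [Fintype Y] [Fintype Z]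
    (pYgX : X → Y → ℝ) (pZgX : X → Z → ℝ) (qYgX : X → Y → ℝ) (qZgX : X → Z → ℝ)
    (qX : X → ℝ) (pX' : X → ℝ) : EReal :=
  sSup {d : EReal | ∃ qhX : X → ℝ, IsPMF qhX ∧ (∀ x, qX x = 0 → qhX x = 0) ∧
    d = klDiv (outDist pYgX pX') (outDist qYgX qhX)
        - klDiv (outDist pZgX pX') (outDist qZgX qhX)}

/-- The quantity `G_{P_XY, Q_XY, P_XZ, Q_XZ}(R)`: the supremum over finite sets `𝒰`
(represented by `Fin m`) and channels `P_{U|X}` with `I_P(U;X|Y) ≤ R` and `I_P(U;X|Z) ≤ R`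
of `∑_u P_U(u) f(P_{X|U}(·|u))`. -/
def Gexp {X Y Z : Type*} [Fintype X] [Fintype Y] [Fintype Z]
    (pXY : X × Y → ℝ) (qXY : X × Y → ℝ) (pXZ : X × Z → ℝ) (qXZ : X × Z → ℝ)
    (R : ℝ) : EReal :=
  sSup {v : EReal | ∃ (m : ℕ) (ch : X → Fin m → ℝ),
    (∀ x, IsPMF (ch x)) ∧
    condMI (fun w : Fin m × X × Y => ch w.2.1 w.1 * pXY (w.2.1, w.2.2))
      (fun w => w.1) (fun w => w.2.1) (fun w => w.2.2) ≤ R ∧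
    condMI (fun w : Fin m × X × Z => ch w.2.1 w.1 * pXZ (w.2.1, w.2.2))
      (fun w => w.1) (fun w => w.2.1) (fun w => w.2.2) ≤ R ∧
    v = ∑ u : Fin m,
      ((∑ x, ch x u * margFst pXY x : ℝ) : EReal) *
        fdiff (condSnd pXY) (condSnd pXZ) (condSnd qXY) (condSnd qXZ)
          (margFst qXY)
          (fun x => ch x u * margFst pXY x / ∑ x', ch x' u * margFst pXY x')}

/-- The error exponent of distributed hypothesis testing, via the Ahlswede–Csiszár
multi-letter characterization. -/
def errExp {X W : Type*} [Fintype X] [Fintype W]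
    (pXW qXW : X × W → ℝ) (R : ℝ) : EReal :=
  sSup {v : EReal | ∃ n : ℕ, 0 < n ∧
    ∃ κ : (Fin n → X) → Fin (2 ^ ⌊(n : ℝ) * R⌋₊) → ℝ,
      (∀ x, IsPMF (κ x)) ∧
      v = (((n : ℝ)⁻¹ : ℝ) : EReal) *
        klDiv
          (fun mw : Fin (2 ^ ⌊(n : ℝ) * R⌋₊) × (Fin n → W) =>
            ∑ x : Fin n → X, (∏ i, pXW (x i, mw.2 i)) * κ x mw.1)
          (fun mw : Fin (2 ^ ⌊(n : ℝ) * R⌋₊) × (Fin n → W) =>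
            ∑ x : Fin n → X, (∏ i, qXW (x i, mw.2 i)) * κ x mw.1)}

/-!
Write `D(P_{Y|Z}‖Q_{Y|Z}|P_Z)` for the divergence of `P_{YZ}` from `P_Z Q_{Y|Z}`. Since `X → Z → Y`
under `Q`, every input law `Q̂_X` yields the same conditional law `Q̂_{Y|Z} = Q_{Y|Z}`. Data
processing and the chain rule then give
`D(P'_Y‖Q̂_Y) ≤ D(P'_{YZ}‖Q̂_{YZ}) = D(P'_Z‖Q̂_Z) + D(P'_{Y|Z}‖Q_{Y|Z}|P'_Z)`,
so that `f(P'_X) ≤ D(P'_{Y|Z}‖Q_{Y|Z}|P'_Z)`, a bound free of `Q̂_X`. Averaging it over `u` for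
`P'_X = P_{X|U=u}` produces, by the compensation identity, `I_P(Y;U|Z) + D(P_{Y|Z}‖Q_{Y|Z}|P_Z)`,
and by the chain rule the last term and `D(P_Z‖Q_Z)` add up to `D(P_{YZ}‖Q_{YZ})`.
-/

section Pushforward

variable {Ω α β : Type*} [Fintype Ω] [Fintype α] {p q : Ω → ℝ} (f : Ω → α)

lemma pushf_apply [DecidableEq β] (p : Ω → ℝ) (f : Ω → β) (b : β) :
    pushf p f b = ∑ ω with f ω = b, p ω := by
  rw [Finset.sum_filter]
  exact Finset.sum_congr rfl fun ω _ => by congr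

lemma pushf_nonneg (hp : ∀ ω, 0 ≤ p ω) (f : Ω → β) (b : β) : 0 ≤ pushf p f b := by
  classical
  rw [pushf_apply]
  exact Finset.sum_nonneg fun ω _ => hp ω

lemma le_pushf (hp : ∀ ω, 0 ≤ p ω) (f : Ω → β) (ω : Ω) : p ω ≤ pushf p f (f ω) := by
  classical
  rw [pushf_apply]
  exact Finset.single_le_sum (fun ω _ => hp ω) (by simp)

lemma eq_zero_of_pushf_eq_zero (hp : ∀ ω, 0 ≤ p ω) {f : Ω → β} {ω : Ω}
    (h : pushf p f (f ω) = 0) : p ω = 0 :=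
  le_antisymm (h ▸ le_pushf hp f ω) (hp ω)

lemma pushf_eq_zero_of_forall_eq_zero {f : Ω → β} {b : β} (h : ∀ ω, f ω = b → p ω = 0) :
    pushf p f b = 0 := by
  classical
  rw [pushf_apply]
  exact Finset.sum_eq_zero fun ω hω => h ω (Finset.mem_filter.1 hω).2

lemma pushf_eq_zero_of_ac (hq : ∀ ω, 0 ≤ q ω) (hpq : ∀ ω, q ω = 0 → p ω = 0) {f : Ω → β} {b : β}
    (h : pushf q f b = 0) : pushf p f b = 0 :=
  pushf_eq_zero_of_forall_eq_zero fun ω hω => hpq ω (eq_zero_of_pushf_eq_zero hq (hω ▸ h))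

lemma sum_pushf_mul (p : Ω → ℝ) (g : α → ℝ) :
    ∑ a, pushf p f a * g a = ∑ ω, p ω * g (f ω) := by
  classical
  rw [← Finset.sum_fiberwise Finset.univ f]
  refine Finset.sum_congr rfl fun a _ => ?_
  rw [pushf_apply, Finset.sum_mul]
  exact Finset.sum_congr rfl fun ω hω => by rw [(Finset.mem_filter.1 hω).2]

lemma sum_pushf (p : Ω → ℝ) : ∑ a, pushf p f a = ∑ ω, p ω := by
  simpa using sum_pushf_mul f p 1

lemma pushf_pushf (p : Ω → ℝ) (g : α → β) :
    pushf (pushf p f) g = pushf p (fun ω => g (f ω)) := by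
  classical
  funext b
  simpa [pushf] using sum_pushf_mul f p fun a => if g a = b then 1 else 0

lemma pushf_comp_mul (p : Ω → ℝ) (f : Ω → β) (g : β → ℝ) (b : β) :
    pushf (fun ω => g (f ω) * p ω) f b = g b * pushf p f b := by
  classical
  rw [pushf_apply, pushf_apply, Finset.mul_sum]
  exact Finset.sum_congr rfl fun ω hω => by rw [(Finset.mem_filter.1 hω).2]

lemma pushf_const_mul (c : ℝ) (p : Ω → ℝ) (f : Ω → β) (b : β) :
    pushf (fun ω => c * p ω) f b = c * pushf p f b :=
  pushf_comp_mul p f (fun _ => c) b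

lemma pushf_snd_apply [Fintype β] (p : α × β → ℝ) (b : β) :
    pushf p Prod.snd b = ∑ a, p (a, b) := by
  classical
  simp [pushf, Fintype.sum_prod_type]

lemma margFst_eq_pushf [Fintype β] (p : α × β → ℝ) : margFst p = pushf p Prod.fst := by
  classical
  funext a
  simp [margFst, pushf, Fintype.sum_prod_type_right]

lemma pushf_eq_pushf_slice {ι γ : Type*} [Fintype ι] (p : ι × Ω → ℝ) {F : ι × Ω → γ} {g : Ω → β}
    {i : ι} {b : β} {c : γ} (h : ∀ j ω, F (j, ω) = c ↔ j = i ∧ g ω = b) :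
    pushf p F c = pushf (fun ω => p (i, ω)) g b := by
  classical
  simp only [pushf, Fintype.sum_prod_type, h, ite_and]
  rw [Finset.sum_eq_single i] <;> simp +contextual

lemma pushf_comp_snd {ι : Type*} [Fintype ι] (p : ι × Ω → ℝ) (g : Ω → β) :
    pushf p (fun w => g w.2) = pushf (fun ω => ∑ i, p (i, ω)) g := by
  rw [← pushf_pushf Prod.snd p g]
  congr 1
  exact funext (pushf_snd_apply p)

end Pushforward

section Reweight

variable {Ω X A : Type*} [Fintype Ω]

/-- The mass function `p` modified so that `f` has law `r`, keeping the conditional law given `f`;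
it vanishes where `f` has no mass under `p`. -/
def reweight (p : Ω → ℝ) (f : Ω → X) (r : X → ℝ) : Ω → ℝ :=
  fun ω => r (f ω) / pushf p f (f ω) * p ω

lemma reweight_nonneg {p : Ω → ℝ} (hp : ∀ ω, 0 ≤ p ω) {r : X → ℝ} (hr : ∀ x, 0 ≤ r x)
    (f : Ω → X) (ω : Ω) : 0 ≤ reweight p f r ω :=
  mul_nonneg (div_nonneg (hr _) (pushf_nonneg hp f _)) (hp ω)

lemma sum_reweight_le [Fintype X] (p : Ω → ℝ) (f : Ω → X) {r : X → ℝ} (hr : ∀ x, 0 ≤ r x) :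
    ∑ ω, reweight p f r ω ≤ ∑ x, r x :=
  calc ∑ ω, reweight p f r ω = ∑ x, pushf p f x * (r x / pushf p f x) := by
        simp only [reweight, sum_pushf_mul f p fun x => r x / pushf p f x, mul_comm]
    _ ≤ ∑ x, r x := Finset.sum_le_sum fun x _ => by
        by_cases h : pushf p f x = 0
        · simp [h, hr x]
        · exact (mul_div_cancel₀ (r x) h).le

lemma outDist_condSnd_pushf [Fintype X] [Fintype A] (p : Ω → ℝ) (f : Ω → X) (g : Ω → A)
    (r : X → ℝ) :
    outDist (condSnd (pushf p fun ω => (f ω, g ω))) r = pushf (reweight p f r) g := by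
  have hmarg : margFst (pushf p fun ω => (f ω, g ω)) = pushf p f := by
    rw [margFst_eq_pushf, pushf_pushf]
  funext a
  calc outDist (condSnd (pushf p fun ω => (f ω, g ω))) r a
    _ = ∑ x, r x / pushf p f x * pushf p (fun ω => (f ω, g ω)) (x, a) := by
        simp only [outDist, condSnd, hmarg, mul_div_assoc', div_mul_eq_mul_div]
    _ = ∑ x, pushf (reweight p f r) (fun ω => (f ω, g ω)) (x, a) :=
        Finset.sum_congr rfl fun x _ =>
          (pushf_comp_mul p (fun ω => (f ω, g ω)) (fun c => r c.1 / pushf p f c.1) (x, a)).symm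
    _ = pushf (reweight p f r) g a := by rw [← pushf_snd_apply, pushf_pushf]

lemma sum_mul_reweight_posterior [Fintype X] {p : Ω → ℝ} (hp : ∀ ω, 0 ≤ p ω) (f : Ω → X)
    {c : X → ℝ} (hc : ∀ x, 0 ≤ c x) (ω : Ω) :
    (∑ x, c x * pushf p f x) *
        reweight p f (fun x => c x * pushf p f x / ∑ x', c x' * pushf p f x') ω
      = c (f ω) * p ω := by
  by_cases hω : p ω = 0
  · simp [reweight, hω]
  have hfω : pushf p f (f ω) ≠ 0 := mt (eq_zero_of_pushf_eq_zero hp) hω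
  by_cases hw : ∑ x, c x * pushf p f x = 0
  · have hcf : c (f ω) * pushf p f (f ω) = 0 :=
      (Finset.sum_eq_zero_iff_of_nonneg fun x _ => mul_nonneg (hc x) (pushf_nonneg hp f x)).1 hw
        (f ω) (Finset.mem_univ _)
    simp [hw, (mul_eq_zero.1 hcf).resolve_right hfω]
  · simp only [reweight]
    field_simp

end Reweight

section Divergence

lemma klDiv_of_ac {α : Type*} [Fintype α] {p q : α → ℝ} (h : ∀ a, q a = 0 → p a = 0) :
    klDiv p q = ((∑ a, p a * Real.log (p a / q a) : ℝ) : EReal) :=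
  if_pos h

lemma klDiv_of_not_ac {α : Type*} [Fintype α] {p q : α → ℝ} (h : ¬∀ a, q a = 0 → p a = 0) :
    klDiv p q = ⊤ :=
  if_neg h

lemma klDiv_self {α : Type*} [Fintype α] (p : α → ℝ) : klDiv p p = 0 := by
  rw [klDiv_of_ac fun _ h => h, EReal.coe_eq_zero]
  refine Finset.sum_eq_zero fun a _ => ?_
  by_cases h : p a = 0 <;> simp [h]

variable {Ω α : Type*} [Fintype Ω] {p q r : Ω → ℝ} {f : Ω → α}

lemma sum_sub_sum_le_sum_mul_log_div (hp : ∀ ω, 0 ≤ p ω) (hq : ∀ ω, 0 ≤ q ω)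
    (hpq : ∀ ω, q ω = 0 → p ω = 0) :
    ∑ ω, p ω - ∑ ω, q ω ≤ ∑ ω, p ω * Real.log (p ω / q ω) := by
  rw [← Finset.sum_sub_distrib]
  refine Finset.sum_le_sum fun ω _ => ?_
  rcases (hp ω).eq_or_lt with hpω | hpω
  · simp [← hpω, hq ω]
  have hqω : 0 < q ω := (hq ω).lt_of_ne' fun h => hpω.ne' (hpq ω h)
  calc p ω - q ω = p ω * (1 - (p ω / q ω)⁻¹) := by field_simp
    _ ≤ p ω * Real.log (p ω / q ω) :=
        mul_le_mul_of_nonneg_left (Real.one_sub_inv_le_log_of_pos (by positivity)) hpω.le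

/-- The conditional divergence `D(p_{ω|f} ‖ q_{ω|f} | p_f)`, as the divergence of `p` from the mass
function with the `f`-marginal of `p` and the conditional law of `q` given `f`. It takes the real
value of the defining sum, which is the divergence only if `p` is absolutely continuous
w.r.t. `q`. -/
def condKLDiv (f : Ω → α) (p q : Ω → ℝ) : ℝ :=
  ∑ ω, p ω * Real.log (p ω / reweight q f (pushf p f) ω)

/-- `p` and `q` have the same conditional law given `f`, cross-multiplied so that values of `f`
without mass need no convention. -/
def SameCond (f : Ω → α) (p q : Ω → ℝ) : Prop :=
  ∀ ω, p ω * pushf q f (f ω) = pushf p f (f ω) * q ω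

lemma SameCond.refl (f : Ω → α) (p : Ω → ℝ) : SameCond f p p :=
  fun ω => mul_comm (p ω) (pushf p f (f ω))

lemma reweight_pushf_ne_zero (hp : ∀ ω, 0 ≤ p ω) (hq : ∀ ω, 0 ≤ q ω)
    (hpq : ∀ ω, q ω = 0 → p ω = 0) {ω : Ω} (hω : p ω ≠ 0) :
    reweight q f (pushf p f) ω ≠ 0 :=
  have hqω : q ω ≠ 0 := mt (hpq ω) hω
  mul_ne_zero (div_ne_zero (mt (eq_zero_of_pushf_eq_zero hp) hω)
    (mt (eq_zero_of_pushf_eq_zero hq) hqω)) hqω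

lemma log_div_reweight (hq : ∀ ω, 0 ≤ q ω) {x : ℝ} (hx : x ≠ 0) {r : α → ℝ} {ω : Ω}
    (hr : r (f ω) ≠ 0) (hqω : q ω ≠ 0) :
    Real.log (x / reweight q f r ω)
      = Real.log x - Real.log (r (f ω)) + Real.log (pushf q f (f ω)) - Real.log (q ω) := by
  have hqf : pushf q f (f ω) ≠ 0 := mt (eq_zero_of_pushf_eq_zero hq) hqω
  rw [reweight, Real.log_div hx (mul_ne_zero (div_ne_zero hr hqf) hqω),
    Real.log_mul (div_ne_zero hr hqf) hqω, Real.log_div hr hqf]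
  ring

lemma condKLDiv_nonneg [Finite α] (f : Ω → α) (hp : ∀ ω, 0 ≤ p ω) (hq : ∀ ω, 0 ≤ q ω)
    (hpq : ∀ ω, q ω = 0 → p ω = 0) : 0 ≤ condKLDiv f p q :=
  have := Fintype.ofFinite α
  calc 0 ≤ ∑ ω, p ω - ∑ ω, reweight q f (pushf p f) ω := by
        rw [sub_nonneg, ← sum_pushf f p]
        exact sum_reweight_le q f (pushf_nonneg hp f)
    _ ≤ condKLDiv f p q :=
        sum_sub_sum_le_sum_mul_log_div hp (reweight_nonneg hq (pushf_nonneg hp f) f)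
          fun _ => not_imp_not.1 (reweight_pushf_ne_zero hp hq hpq)

lemma condKLDiv_const_mul (f : Ω → α) (c : ℝ) (p q : Ω → ℝ) :
    condKLDiv f (fun ω => c * p ω) q = c * condKLDiv f p q := by
  rcases eq_or_ne c 0 with rfl | hc
  · simp [condKLDiv]
  simp only [condKLDiv, reweight, pushf_const_mul, Finset.mul_sum]
  refine Finset.sum_congr rfl fun ω _ => ?_
  rw [mul_div_assoc c (pushf p f _), mul_assoc c (_ / _), mul_div_mul_left _ _ hc, mul_assoc]

lemma klDiv_eq_condKLDiv_add [Fintype α] (hp : ∀ ω, 0 ≤ p ω) (hq : ∀ ω, 0 ≤ q ω)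
    (hr : ∀ ω, 0 ≤ r ω) (hpq : ∀ ω, q ω = 0 → p ω = 0) (hrq : SameCond f r q) :
    klDiv p r = condKLDiv f p q + klDiv (pushf p f) (pushf r f) := by
  by_cases hf : ∀ a, pushf r f a = 0 → pushf p f a = 0
  · have hpr : ∀ ω, r ω = 0 → p ω = 0 := fun ω hrω => by
      have h := hrq ω
      rw [hrω, zero_mul, eq_comm, mul_eq_zero] at h
      exact h.elim (fun h => eq_zero_of_pushf_eq_zero hp (hf _ h)) (hpq ω)
    rw [klDiv_of_ac hpr, klDiv_of_ac hf, ← EReal.coe_add, EReal.coe_eq_coe_iff,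
      sum_pushf_mul f p fun a => Real.log (pushf p f a / pushf r f a), condKLDiv,
      ← Finset.sum_add_distrib]
    refine Finset.sum_congr rfl fun ω _ => ?_
    by_cases hω : p ω = 0
    · simp [hω]
    have hqω : q ω ≠ 0 := mt (hpq ω) hω
    have hrω : r ω ≠ 0 := mt (hpr ω) hω
    have hpf : pushf p f (f ω) ≠ 0 := mt (eq_zero_of_pushf_eq_zero hp) hω
    have : pushf q f (f ω) ≠ 0 := mt (eq_zero_of_pushf_eq_zero hq) hqω
    have hrf : pushf r f (f ω) ≠ 0 := mt (eq_zero_of_pushf_eq_zero hr) hrω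
    rw [← mul_add, ← Real.log_mul (div_ne_zero hω (reweight_pushf_ne_zero hp hq hpq hω))
      (div_ne_zero hpf hrf), reweight]
    congr 2
    have h := hrq ω
    field_simp
    linarith
  · have hpr : ¬∀ ω, r ω = 0 → p ω = 0 := fun h => hf fun a => pushf_eq_zero_of_ac hr h
    rw [klDiv_of_not_ac hf, klDiv_of_not_ac hpr, EReal.coe_add_top]

lemma klDiv_pushf_le [Fintype α] (hp : ∀ ω, 0 ≤ p ω) (hq : ∀ ω, 0 ≤ q ω) (f : Ω → α) :
    klDiv (pushf p f) (pushf q f) ≤ klDiv p q := by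
  by_cases hpq : ∀ ω, q ω = 0 → p ω = 0
  · rw [klDiv_eq_condKLDiv_add hp hq hq hpq (SameCond.refl f q)]
    exact le_add_of_nonneg_left (EReal.coe_nonneg.2 (condKLDiv_nonneg f hp hq hpq))
  · rw [klDiv_of_not_ac hpq]
    exact le_top

lemma klDiv_pushf_sub_klDiv_pushf_le {β : Type*} [Fintype α] [Fintype β] (hp : ∀ ω, 0 ≤ p ω)
    (hq : ∀ ω, 0 ≤ q ω) (hr : ∀ ω, 0 ≤ r ω) (hpq : ∀ ω, q ω = 0 → p ω = 0)
    (hrq : SameCond f r q) (g : Ω → β) :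
    klDiv (pushf p g) (pushf r g) - klDiv (pushf p f) (pushf r f) ≤ condKLDiv f p q :=
  EReal.sub_le_of_le_add <|
    (klDiv_pushf_le hp hr g).trans_eq (klDiv_eq_condKLDiv_add hp hq hr hpq hrq)

end Divergence

section CondMI

variable {Ω α β γ : Type*} [Fintype Ω] [Fintype α]

lemma entropy_pushf (p : Ω → ℝ) (f : Ω → α) :
    entropy (pushf p f) = -∑ ω, p ω * Real.log (pushf p f (f ω)) := by
  rw [entropy, sum_pushf_mul f p fun a => Real.log (pushf p f a)]

lemma condMI_eq_sum [Fintype β] [Fintype γ] (p : Ω → ℝ) (A : Ω → α) (B : Ω → β) (C : Ω → γ) :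
    condMI p A B C = ∑ ω, p ω *
      (Real.log (pushf p (fun ω => (A ω, B ω, C ω)) (A ω, B ω, C ω)) + Real.log (pushf p C (C ω))
        - Real.log (pushf p (fun ω => (A ω, C ω)) (A ω, C ω))
        - Real.log (pushf p (fun ω => (B ω, C ω)) (B ω, C ω))) := by
  simp only [condMI, entropy_pushf, mul_add, mul_sub, Finset.sum_add_distrib,
    Finset.sum_sub_distrib]
  ring

lemma condKLDiv_pushf (p : Ω → ℝ) (g : Ω → α) (f : α → β) (q : α → ℝ) :
    condKLDiv f (pushf p g) q = ∑ ω, p ω *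
      Real.log (pushf p g (g ω) / reweight q f (pushf p fun ω => f (g ω)) (g ω)) := by
  rw [condKLDiv, pushf_pushf,
    sum_pushf_mul g p fun a => Real.log (pushf p g a / reweight q f _ a)]

lemma condMI_fst_eq_sum {ι : Type*} [Fintype ι] [Fintype γ] (p : ι × Ω → ℝ) (A : Ω → α)
    (C : Ω → γ) :
    condMI p (fun w => A w.2) Prod.fst (fun w => C w.2) = ∑ i, ∑ ω, p (i, ω) *
      (Real.log (pushf (fun ω => p (i, ω)) (fun ω => (A ω, C ω)) (A ω, C ω))
        + Real.log (pushf (fun ω => ∑ j, p (j, ω)) C (C ω))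
        - Real.log (pushf (fun ω => ∑ j, p (j, ω)) (fun ω => (A ω, C ω)) (A ω, C ω))
        - Real.log (pushf (fun ω => p (i, ω)) C (C ω))) := by
  rw [condMI_eq_sum, Fintype.sum_prod_type]
  refine Finset.sum_congr rfl fun i _ => Finset.sum_congr rfl fun ω _ => ?_
  rw [pushf_comp_snd p C, pushf_comp_snd p fun ω => (A ω, C ω),
    pushf_eq_pushf_slice p (c := (A ω, i, C ω)) (g := fun ω => (A ω, C ω)) (b := (A ω, C ω))
      (by simp only [Prod.mk.injEq]; tauto),
    pushf_eq_pushf_slice p (c := (i, C ω)) (g := C) (i := i) (b := C ω) (by simp)]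

lemma sum_condKLDiv_pushf {ι : Type*} [Fintype ι] [Fintype γ] {p : ι × Ω → ℝ}
    (hp : ∀ w, 0 ≤ p w) (A : Ω → α) (C : Ω → γ) {q : α × γ → ℝ} (hq : ∀ c, 0 ≤ q c)
    (hpq : ∀ c, q c = 0 → pushf (fun ω => ∑ i, p (i, ω)) (fun ω => (A ω, C ω)) c = 0) :
    ∑ i, condKLDiv Prod.snd (pushf (fun ω => p (i, ω)) fun ω => (A ω, C ω)) q
      = condMI p (fun w => A w.2) Prod.fst (fun w => C w.2)
        + condKLDiv Prod.snd (pushf (fun ω => ∑ i, p (i, ω)) fun ω => (A ω, C ω)) q := by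
  have hp_sum : ∀ ω, 0 ≤ ∑ i, p (i, ω) := fun ω => Finset.sum_nonneg fun i _ => hp (i, ω)
  simp only [condMI_fst_eq_sum, condKLDiv_pushf]
  simp only [Finset.sum_mul _ _ (Real.log _)]
  rw [Finset.sum_comm (γ := Ω), ← Finset.sum_add_distrib]
  refine Finset.sum_congr rfl fun i _ => ?_
  rw [← Finset.sum_add_distrib]
  refine Finset.sum_congr rfl fun ω _ => ?_
  by_cases hω : p (i, ω) = 0
  · simp [hω]
  have hω_sum : ∑ j, p (j, ω) ≠ 0 := fun h =>
    hω ((Finset.sum_eq_zero_iff_of_nonneg fun j _ => hp (j, ω)).1 h i (Finset.mem_univ i))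
  have hslice_ac : pushf (fun ω => p (i, ω)) (fun ω => (A ω, C ω)) (A ω, C ω) ≠ 0 :=
    mt (eq_zero_of_pushf_eq_zero fun ω => hp (i, ω)) hω
  have hslice_c : pushf (fun ω => p (i, ω)) C (C ω) ≠ 0 :=
    mt (eq_zero_of_pushf_eq_zero fun ω => hp (i, ω)) hω
  have hac : pushf (fun ω => ∑ j, p (j, ω)) (fun ω => (A ω, C ω)) (A ω, C ω) ≠ 0 :=
    mt (eq_zero_of_pushf_eq_zero hp_sum) hω_sum
  have hc : pushf (fun ω => ∑ j, p (j, ω)) C (C ω) ≠ 0 :=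
    mt (eq_zero_of_pushf_eq_zero hp_sum) hω_sum
  have hq_ac : q (A ω, C ω) ≠ 0 := mt (hpq _) hac
  rw [← mul_add, log_div_reweight hq hslice_ac hslice_c hq_ac, log_div_reweight hq hac hc hq_ac]
  ring

end CondMI

section Markov

variable {X Y Z : Type*} [Fintype X] [Fintype Y] [Fintype Z] {P Q : X × Y × Z → ℝ}

/-- The Markov chain `X → Z → Y` under `Q`, that is, `Q_{XYZ} Q_Z = Q_{XZ} Q_{YZ}`. -/
def IsMarkov (Q : X × Y × Z → ℝ) : Prop :=
  ∀ x y z, Q (x, y, z) * pushf Q (fun w => w.2.2) z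
    = pushf Q (fun w => (w.1, w.2.2)) (x, z) * pushf Q (fun w => (w.2.1, w.2.2)) (y, z)

/-- The functional `f` built from the conditionals of `P_{XYZ}`, `Q_{XYZ}` and the marginal `Q_X`,
as a function of the joint mass functions. -/
def jointFdiff (P Q : X × Y × Z → ℝ) : (X → ℝ) → EReal :=
  fdiff (condSnd (pushf P fun w => (w.1, w.2.1))) (condSnd (pushf P fun w => (w.1, w.2.2)))
    (condSnd (pushf Q fun w => (w.1, w.2.1))) (condSnd (pushf Q fun w => (w.1, w.2.2)))
    (pushf Q fun w => w.1)

lemma sameCond_pushf_reweight (hMarkov : IsMarkov Q) (r : X → ℝ) :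
    SameCond Prod.snd (pushf (reweight Q Prod.fst r) Prod.snd) (pushf Q Prod.snd) := by
  rintro ⟨y, z⟩
  set c : X → ℝ := fun x => r x / pushf Q Prod.fst x
  have hz : pushf (reweight Q Prod.fst r) (fun w => w.2.2) z
      = ∑ x, c x * pushf Q (fun w => (w.1, w.2.2)) (x, z) :=
    calc pushf (reweight Q Prod.fst r) (fun w => w.2.2) z
      _ = ∑ x, pushf (reweight Q Prod.fst r) (fun w => (w.1, w.2.2)) (x, z) := by
          rw [← pushf_snd_apply, pushf_pushf]
      _ = _ := Finset.sum_congr rfl fun x _ =>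
          pushf_comp_mul Q (fun w => (w.1, w.2.2)) (fun v => c v.1) (x, z)
  rw [pushf_pushf, pushf_pushf, hz, pushf_snd_apply, Finset.sum_mul, Finset.sum_mul]
  refine Finset.sum_congr rfl fun x _ => ?_
  rw [reweight, mul_assoc, mul_assoc, hMarkov x y z]

lemma jointFdiff_le_condKLDiv (hP : ∀ w, 0 ≤ P w) (hQ : ∀ w, 0 ≤ Q w) (hMarkov : IsMarkov Q)
    (hPQ : ∀ w, pushf Q Prod.snd w = 0 → pushf P Prod.snd w = 0)
    {r : X → ℝ} (hr : ∀ x, 0 ≤ r x) :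
    jointFdiff P Q r
      ≤ condKLDiv Prod.snd (pushf (reweight P Prod.fst r) Prod.snd) (pushf Q Prod.snd) := by
  refine sSup_le ?_
  rintro _ ⟨q, hq, -, rfl⟩
  have hac : ∀ w, pushf Q Prod.snd w = 0 → pushf (reweight P Prod.fst r) Prod.snd w = 0 :=
    fun w hw => pushf_eq_zero_of_ac hP (fun ω hω => by simp [reweight, hω]) (hPQ w hw)
  have h := klDiv_pushf_sub_klDiv_pushf_le (pushf_nonneg (reweight_nonneg hP hr Prod.fst) Prod.snd)
    (pushf_nonneg hQ Prod.snd) (pushf_nonneg (reweight_nonneg hQ hq.1 Prod.fst) Prod.snd) hac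
    (sameCond_pushf_reweight hMarkov q) Prod.fst
  simpa only [pushf_pushf, outDist_condSnd_pushf] using h

lemma mul_jointFdiff_le_condKLDiv (hP : ∀ w, 0 ≤ P w) (hQ : ∀ w, 0 ≤ Q w) (hMarkov : IsMarkov Q)
    (hPQ : ∀ w, pushf Q Prod.snd w = 0 → pushf P Prod.snd w = 0)
    {c : X → ℝ} (hc : ∀ x, 0 ≤ c x) :
    ((∑ x, c x * pushf P (fun w => w.1) x : ℝ) : EReal) *
        jointFdiff P Q
          (fun x => c x * pushf P (fun w => w.1) x / ∑ x', c x' * pushf P (fun w => w.1) x')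
      ≤ condKLDiv Prod.snd (pushf (fun w => c w.1 * P w) Prod.snd) (pushf Q Prod.snd) := by
  have hcP : ∀ x, 0 ≤ c x * pushf P (fun w => w.1) x := fun x =>
    mul_nonneg (hc x) (pushf_nonneg hP _ x)
  set m := ∑ x, c x * pushf P (fun w => w.1) x with hm
  have hm0 : 0 ≤ m := Finset.sum_nonneg fun x _ => hcP x
  have hjoint : pushf (fun w => c w.1 * P w) Prod.snd = fun w => m *
      pushf (reweight P Prod.fst fun x => c x * pushf P (fun w => w.1) x / m) Prod.snd w := by
    funext w
    rw [← pushf_const_mul]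
    simp only [hm, sum_mul_reweight_posterior hP Prod.fst hc]
  rw [hjoint, condKLDiv_const_mul, EReal.coe_mul]
  exact mul_le_mul_of_nonneg_left
    (jointFdiff_le_condKLDiv hP hQ hMarkov hPQ fun x => div_nonneg (hcP x) hm0)
    (EReal.coe_nonneg.2 hm0)

lemma coe_sum_ereal {ι : Type*} (s : Finset ι) (a : ι → ℝ) :
    ((∑ i ∈ s, a i : ℝ) : EReal) = ∑ i ∈ s, (a i : EReal) :=
  map_sum (⟨⟨Real.toEReal, EReal.coe_zero⟩, EReal.coe_add⟩ : ℝ →+ EReal) a s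

lemma sum_condKLDiv_channel {U : Type*} [Fintype U] (hP : ∀ w, 0 ≤ P w) {q : Y × Z → ℝ}
    (hq : ∀ w, 0 ≤ q w) (hPq : ∀ w, q w = 0 → pushf P Prod.snd w = 0)
    {ch : X → U → ℝ} (hch : ∀ x, IsPMF (ch x)) :
    ∑ u, condKLDiv Prod.snd (pushf (fun w => ch w.1 u * P w) Prod.snd) q
      = condMI (fun w : U × X × Y × Z => ch w.2.1 w.1 * P w.2)
          (fun w => w.2.2.1) (fun w => w.1) (fun w => w.2.2.2)
        + condKLDiv Prod.snd (pushf P Prod.snd) q := by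
  have hmix : (fun w => ∑ u, ch w.1 u * P w) = P := by
    funext w
    rw [← Finset.sum_mul, (hch w.1).2, one_mul]
  have h := sum_condKLDiv_pushf (p := fun w : U × X × Y × Z => ch w.2.1 w.1 * P w.2)
    (fun w => mul_nonneg ((hch w.2.1).1 w.1) (hP w.2)) (fun w => w.2.1) (fun w => w.2.2) hq
    (by simpa only [hmix] using hPq)
  simpa only [hmix] using h

end Markov

theorem fdiff_le_condMI_add_klDiv_general {X Y Z U : Type*}
    [Fintype X] [Fintype Y] [Fintype Z] [Fintype U]
    (P Q : X × Y × Z → ℝ) (hP : ∀ w, 0 ≤ P w) (hQ : ∀ w, 0 ≤ Q w) (hMarkov : IsMarkov Q)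
    (ch : X → U → ℝ) (hch : ∀ x, IsPMF (ch x)) :
    (∑ u, ((∑ x, ch x u * pushf P (fun w => w.1) x : ℝ) : EReal) *
        jointFdiff P Q (fun x => ch x u * pushf P (fun w => w.1) x /
          ∑ x', ch x' u * pushf P (fun w => w.1) x'))
        + klDiv (pushf P (fun w => w.2.2)) (pushf Q (fun w => w.2.2))
      ≤ ((condMI (fun w : U × X × Y × Z => ch w.2.1 w.1 * P w.2)
            (fun w => w.2.2.1) (fun w => w.1) (fun w => w.2.2.2) : ℝ) : EReal)
        + klDiv (pushf P (fun w => w.2)) (pushf Q (fun w => w.2)) := by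
  by_cases hPQ : ∀ w, pushf Q Prod.snd w = 0 → pushf P Prod.snd w = 0
  swap
  · rw [klDiv_of_not_ac hPQ, EReal.coe_add_top]
    exact le_top
  have hQ_YZ : ∀ w, 0 ≤ pushf Q Prod.snd w := pushf_nonneg hQ Prod.snd
  have hchain := klDiv_eq_condKLDiv_add (f := Prod.snd) (pushf_nonneg hP Prod.snd) hQ_YZ hQ_YZ hPQ
    (SameCond.refl _ _)
  rw [pushf_pushf, pushf_pushf] at hchain
  rw [hchain, ← add_assoc, ← EReal.coe_add, ← sum_condKLDiv_channel hP hQ_YZ hPQ hch,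
    coe_sum_ereal]
  gcongr with u
  exact mul_jointFdiff_le_condKLDiv hP hQ hMarkov hPQ fun x => (hch x).1 u

/-- If `X → Z → Y` is Markov under `Q` and `P_XZ = Q_XZ`, then for every
channel `P_{U|X}`, `∑_u P_U(u) f(P_{X|U}(·|u)) ≤ I_P(Y;U|Z) + D(P_YZ ‖ Q_YZ)`. -/
theorem fdiff_le_condMI_add_klDiv {X Y Z U : Type*}
    [Fintype X] [Fintype Y] [Fintype Z] [Fintype U]
    (P Q : X × Y × Z → ℝ) (hP : IsPMF P) (hQ : IsPMF Q)
    (hMarkov : ∀ x y z, Q (x, y, z) * pushf Q (fun w => w.2.2) z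
      = pushf Q (fun w => (w.1, w.2.2)) (x, z) * pushf Q (fun w => (w.2.1, w.2.2)) (y, z))
    (hPQXZ : pushf P (fun w => (w.1, w.2.2)) = pushf Q (fun w => (w.1, w.2.2)))
    (ch : X → U → ℝ) (hch : ∀ x, IsPMF (ch x)) :
    (∑ u, ((∑ x, ch x u * pushf P (fun w => w.1) x : ℝ) : EReal) *
        fdiff (condSnd (pushf P (fun w => (w.1, w.2.1))))
          (condSnd (pushf P (fun w => (w.1, w.2.2))))
          (condSnd (pushf Q (fun w => (w.1, w.2.1))))
          (condSnd (pushf Q (fun w => (w.1, w.2.2))))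
          (pushf Q (fun w => w.1))
          (fun x => ch x u * pushf P (fun w => w.1) x /
            ∑ x', ch x' u * pushf P (fun w => w.1) x'))
      ≤ ((condMI (fun w : U × X × Y × Z => ch w.2.1 w.1 * P w.2)
            (fun w => w.2.2.1) (fun w => w.1) (fun w => w.2.2.2) : ℝ) : EReal)
        + klDiv (pushf P (fun w => w.2)) (pushf Q (fun w => w.2)) := by
  have hPQZ : pushf P (fun w => w.2.2) = pushf Q (fun w => w.2.2) := by
    simpa only [pushf_pushf] using congrArg (pushf · Prod.snd) hPQXZ
  simpa only [jointFdiff, hPQZ, klDiv_self, add_zero] using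
    fdiff_le_condMI_add_klDiv_general P Q hP.1 hQ.1 hMarkov ch hch

end
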